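/- Let φ be a nonzero weak Jacobi form of weight −2 and index 1 and ψ a nonzero weak Jacobi form of weight 0 and index 1 in the sense of Eichler–Zagier (i.e., W(A_1)-invariant weak Jacobi forms associated to the lattice A_1). Then the Jacobian J(φ,ψ) = φ·∂ψ/∂z − ψ·∂φ/∂z is not identically zero, and it equals c·ϑ(τ,2z)/η(τ)³ for some nonzero constant c. -/

import Mathlib

open Complex Matrix

noncomputable section

/-- The ℂ-bilinear pairing on `ℂ^l` induced by an integral Gram matrix `M`. -/
def pairC {l : ℕ} (M : Matrix (Fin l) (Fin l) ℤ) (v w : Fin l → ℂ) : ℂ :=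
  ∑ i, ∑ j, v i * (M i j : ℂ) * w j

/-- The ℚ-bilinear pairing on `ℚ^l` induced by an integral Gram matrix `M`. -/
def pairQ {l : ℕ} (M : Matrix (Fin l) (Fin l) ℤ) (v w : Fin l → ℚ) : ℚ :=
  ∑ i, ∑ j, v i * (M i j : ℚ) * w j

def zc {l : ℕ} (x : Fin l → ℤ) : Fin l → ℂ := fun i => (x i : ℂ)
def qc {l : ℕ} (x : Fin l → ℚ) : Fin l → ℂ := fun i => (x i : ℂ)

/-- `M` is the Gram matrix of an even positive definite lattice. -/
structure IsEvenPosDef {l : ℕ} (M : Matrix (Fin l) (Fin l) ℤ) : Prop where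
  symm : M.IsSymm
  even_diag : ∀ i, Even (M i i)
  posDef : (M.map (Int.cast : ℤ → ℝ)).PosDef

/-- `G` is a subgroup of the integral orthogonal group `O(L)` of the lattice with
Gram matrix `M`. -/
structure IsOrthSubgroup {l : ℕ} (M : Matrix (Fin l) (Fin l) ℤ)
    (G : Set (Matrix (Fin l) (Fin l) ℤ)) : Prop where
  one_mem : 1 ∈ G
  mul_mem : ∀ σ₁ ∈ G, ∀ σ₂ ∈ G, σ₁ * σ₂ ∈ G
  inv_mem : ∀ σ ∈ G, ∃ σ' ∈ G, σ * σ' = 1 ∧ σ' * σ = 1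
  isometry : ∀ σ ∈ G, σᵀ * M * σ = M

/-- `ℓ ∈ L^*`, the dual lattice. -/
def InDual {l : ℕ} (M : Matrix (Fin l) (Fin l) ℤ) (ℓ : Fin l → ℚ) : Prop :=
  ∀ x : Fin l → ℤ, ∃ n : ℤ, pairQ M ℓ (fun i => (x i : ℚ)) = n

/-- `c` is a family of Fourier coefficients, supported on `n ≥ 0` and `ℓ ∈ L^*`,
whose associated Fourier series converges to `φ` on `ℍ × (L ⊗ ℂ)`. -/
def FourierRep {l : ℕ} (M : Matrix (Fin l) (Fin l) ℤ) (φ : ℂ → (Fin l → ℂ) → ℂ)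
    (c : ℕ → (Fin l → ℚ) → ℂ) : Prop :=
  (∀ n ℓ, c n ℓ ≠ 0 → InDual M ℓ) ∧
  ∀ τ : ℂ, 0 < τ.im → ∀ z : Fin l → ℂ,
    HasSum (fun p : ℕ × (Fin l → ℚ) =>
      c p.1 p.2 * Complex.exp (2 * (Real.pi : ℂ) * Complex.I *
        ((p.1 : ℂ) * τ + pairC M (qc p.2) z))) (φ τ z)

/-- `φ` is a weak Jacobi form of weight `k` and index `t` associated to the even
positive definite lattice with Gram matrix `M`. -/
def IsWeakJacobiForm {l : ℕ} (M : Matrix (Fin l) (Fin l) ℤ) (k : ℤ) (t : ℕ)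
    (φ : ℂ → (Fin l → ℂ) → ℂ) : Prop :=
  (DifferentiableOn ℂ (fun p : ℂ × (Fin l → ℂ) => φ p.1 p.2)
    ({τ : ℂ | 0 < τ.im} ×ˢ (Set.univ : Set (Fin l → ℂ)))) ∧
  (∀ a b c d : ℤ, a * d - b * c = 1 → ∀ τ : ℂ, 0 < τ.im → ∀ z : Fin l → ℂ,
    φ (((a : ℂ) * τ + (b : ℂ)) / ((c : ℂ) * τ + (d : ℂ)))
        (fun i => z i / ((c : ℂ) * τ + (d : ℂ))) =
      ((c : ℂ) * τ + (d : ℂ)) ^ k *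
        Complex.exp ((t : ℂ) * (Real.pi : ℂ) * Complex.I * (c : ℂ) *
          pairC M z z / ((c : ℂ) * τ + (d : ℂ))) * φ τ z) ∧
  (∀ x y : Fin l → ℤ, ∀ τ : ℂ, 0 < τ.im → ∀ z : Fin l → ℂ,
    φ τ (fun i => z i + (x i : ℂ) * τ + (y i : ℂ)) =
      Complex.exp (-(t : ℂ) * (Real.pi : ℂ) * Complex.I *
        (pairC M (zc x) (zc x) * τ + 2 * pairC M (zc x) z)) * φ τ z) ∧
  (∃ c : ℕ → (Fin l → ℚ) → ℂ, FourierRep M φ c)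

/-- `φ` is invariant under the action of `G` on the lattice variable. -/
def GInvariant {l : ℕ} (G : Set (Matrix (Fin l) (Fin l) ℤ))
    (φ : ℂ → (Fin l → ℂ) → ℂ) : Prop :=
  ∀ σ ∈ G, ∀ τ : ℂ, 0 < τ.im → ∀ z : Fin l → ℂ,
    φ τ ((σ.map (Int.cast : ℤ → ℂ)).mulVec z) = φ τ z

/-- The partial derivative of `φ(τ, 𝔷)` in the `i`-th coordinate of the lattice
variable `𝔷`. -/
def pderiv' {l : ℕ} (i : Fin l) (φ : ℂ → (Fin l → ℂ) → ℂ) (τ : ℂ) (z : Fin l → ℂ) : ℂ :=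
  deriv (fun w : ℂ => φ τ (Function.update z i w)) (z i)

/-- The Jacobian `J(φ_1, ..., φ_{l+1})` of `l+1` Jacobi forms of indices `m j`:
the determinant of the matrix whose first row is `(m_j φ_j)_j` and whose later
rows are the partial derivatives `∂φ_j/∂z_i`. -/
def jacJacobian {l : ℕ} (m : Fin (l + 1) → ℕ) (φ : Fin (l + 1) → ℂ → (Fin l → ℂ) → ℂ)
    (τ : ℂ) (z : Fin l → ℂ) : ℂ :=
  Matrix.det (Matrix.of fun i j : Fin (l + 1) =>
    Fin.cases ((m j : ℂ) * φ j τ z) (fun i' : Fin l => pderiv' i' (φ j) τ z) i)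

/-- `f` is a (holomorphic) modular form of weight `k` on `SL₂(ℤ)`, viewed as a
holomorphic function on the upper half-plane with a Fourier expansion supported
on `n ≥ 0`. -/
def IsModularForm (k : ℤ) (f : ℂ → ℂ) : Prop :=
  DifferentiableOn ℂ f {τ : ℂ | 0 < τ.im} ∧
  (∀ a b c d : ℤ, a * d - b * c = 1 → ∀ τ : ℂ, 0 < τ.im →
    f (((a : ℂ) * τ + (b : ℂ)) / ((c : ℂ) * τ + (d : ℂ))) =
      ((c : ℂ) * τ + (d : ℂ)) ^ k * f τ) ∧
  ∃ cf : ℕ → ℂ, ∀ τ : ℂ, 0 < τ.im →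
    HasSum (fun n : ℕ => cf n * Complex.exp (2 * (Real.pi : ℂ) * Complex.I * (n : ℂ) * τ))
      (f τ)

/-- `φ` is not identically zero on `ℍ × (L ⊗ ℂ)`. -/
def NotIdenticallyZero {l : ℕ} (φ : ℂ → (Fin l → ℂ) → ℂ) : Prop :=
  ∃ τ z, 0 < τ.im ∧ φ τ z ≠ 0

/-- `r` is a primitive lattice vector. -/
def PrimitiveVec {l : ℕ} (r : Fin l → ℤ) : Prop :=
  r ≠ 0 ∧ ∀ (n : ℤ) (s : Fin l → ℤ), r = n • s → IsUnit n

/-- The reflection `σ_r : v ↦ v - ⟨r^∨, v⟩ r` belongs to `G`. -/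
def ReflectionIn {l : ℕ} (M : Matrix (Fin l) (Fin l) ℤ)
    (G : Set (Matrix (Fin l) (Fin l) ℤ)) (r : Fin l → ℤ) : Prop :=
  ∃ S ∈ G, ∀ v : Fin l → ℂ,
    (S.map (Int.cast : ℤ → ℂ)).mulVec v =
      fun i => v i - 2 * pairC M (zc r) v / pairC M (zc r) (zc r) * (r i : ℂ)

/-- `(τ, z)` belongs to `D_r(τ)`, i.e. `⟨r^∨, z⟩ ∈ ℤτ ⊕ ℤ`. -/
def OnMirror {l : ℕ} (M : Matrix (Fin l) (Fin l) ℤ) (r : Fin l → ℤ) (τ : ℂ)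
    (z : Fin l → ℂ) : Prop :=
  ∃ a b : ℤ, 2 * pairC M (zc r) z / pairC M (zc r) (zc r) = (a : ℂ) * τ + (b : ℂ)

/-- `J` vanishes precisely, and with multiplicity one, on the sets `D_r(τ)` for
primitive `r ∈ L` whose reflection lies in `G`. -/
def VanishesOrderOneOnMirrors {l : ℕ} (M : Matrix (Fin l) (Fin l) ℤ)
    (G : Set (Matrix (Fin l) (Fin l) ℤ)) (J : ℂ → (Fin l → ℂ) → ℂ) : Prop :=
  ∀ τ : ℂ, 0 < τ.im → ∀ z : Fin l → ℂ,
    ((J τ z = 0) ↔ ∃ r, PrimitiveVec r ∧ ReflectionIn M G r ∧ OnMirror M r τ z) ∧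
    (∀ r, PrimitiveVec r → ReflectionIn M G r → OnMirror M r τ z →
      (∀ r', PrimitiveVec r' → ReflectionIn M G r' → OnMirror M r' τ z →
        r' = r ∨ r' = -r) →
      deriv (fun w : ℂ => J τ (fun i => z i + w * (r i : ℂ))) 0 ≠ 0)

/-- The Fourier expansion of `φ` has a non-zero coefficient of type `f(0, ℓ)`. -/
def HasNonzeroQZeroTerm {l : ℕ} (M : Matrix (Fin l) (Fin l) ℤ)
    (φ : ℂ → (Fin l → ℂ) → ℂ) : Prop :=
  ∃ c : ℕ → (Fin l → ℚ) → ℂ, FourierRep M φ c ∧ ∃ ℓ, c 0 ℓ ≠ 0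

/-- `ψ = P(φ_1, ..., φ_n)` where `P` is a polynomial with coefficients which are
modular forms on `SL₂(ℤ)`, graded so that each monomial has weight `k` and index `t`. -/
def MPolyRep {l n : ℕ} (kj : Fin n → ℤ) (mj : Fin n → ℕ)
    (φ : Fin n → ℂ → (Fin l → ℂ) → ℂ) (k : ℤ) (t : ℕ)
    (c : (Fin n → ℕ) → ℂ → ℂ) (ψ : ℂ → (Fin l → ℂ) → ℂ) : Prop :=
  {d : Fin n → ℕ | c d ≠ 0}.Finite ∧
  (∀ d : Fin n → ℕ, c d ≠ 0 →
    (∑ j, d j * mj j) = t ∧ IsModularForm (k - ∑ j, (d j : ℤ) * kj j) (c d)) ∧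
  (∀ τ : ℂ, 0 < τ.im → ∀ z : Fin l → ℂ,
    ψ τ z = ∑ᶠ d : Fin n → ℕ, c d τ * ∏ j, (φ j τ z) ^ (d j))

/-- The forms `φ_1, ..., φ_n` are algebraically independent over the graded ring
`M_*(SL₂(ℤ))` of modular forms on `SL₂(ℤ)`. -/
def AlgIndepOverM {l n : ℕ} (φ : Fin n → ℂ → (Fin l → ℂ) → ℂ) : Prop :=
  ∀ c : (Fin n → ℕ) → ℂ → ℂ,
    {d : Fin n → ℕ | c d ≠ 0}.Finite →
    (∀ d, c d ≠ 0 → ∃ w : ℤ, IsModularForm w (c d)) →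
    (∀ τ : ℂ, 0 < τ.im → ∀ z : Fin l → ℂ,
      (∑ᶠ d : Fin n → ℕ, c d τ * ∏ j, (φ j τ z) ^ (d j)) = 0) →
    ∀ d τ, 0 < τ.im → c d τ = 0


/-- The Jacobi theta function
`ϑ(τ,z) = q^{1/8}(ζ^{1/2}-ζ^{-1/2}) ∏_{n≥1} (1-q^n ζ)(1-q^n ζ^{-1})(1-q^n)`. -/
def jtheta (τ z : ℂ) : ℂ :=
  Complex.exp ((Real.pi : ℂ) * Complex.I * τ / 4) *
    (Complex.exp ((Real.pi : ℂ) * Complex.I * z) -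
      Complex.exp (-((Real.pi : ℂ) * Complex.I * z))) *
    ∏' n : ℕ,
      ((1 - Complex.exp (2 * (Real.pi : ℂ) * Complex.I * ((n : ℂ) + 1) * τ) *
            Complex.exp (2 * (Real.pi : ℂ) * Complex.I * z)) *
       (1 - Complex.exp (2 * (Real.pi : ℂ) * Complex.I * ((n : ℂ) + 1) * τ) *
            Complex.exp (-(2 * (Real.pi : ℂ) * Complex.I * z))) *
       (1 - Complex.exp (2 * (Real.pi : ℂ) * Complex.I * ((n : ℂ) + 1) * τ)))

/-- The Dedekind eta function `η(τ) = q^{1/24} ∏_{n≥1} (1-q^n)`. -/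
def dedekindEta (τ : ℂ) : ℂ :=
  Complex.exp ((Real.pi : ℂ) * Complex.I * τ / 12) *
    ∏' n : ℕ, (1 - Complex.exp (2 * (Real.pi : ℂ) * Complex.I * ((n : ℂ) + 1) * τ))

/-- The Gram matrix of the lattice `A₁ = ⟨ℤ, 2x²⟩`. -/
def A1Gram : Matrix (Fin 1) (Fin 1) ℤ := !![2]

/-! For fixed `τ`, a weak Jacobi form of index one for `A₁` is a theta function of index one in `z`,
and it is even because its weight is. The Wronskian of two such functions is an odd theta function
of index two. These form a line: the relation under `z ↦ z + τ` determines all Fourier coefficients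
from those at `n = -1, 0, 1, 2`, and oddness leaves only the one at `n = 1` free. Since
`ϑ(τ, 2z) / η(τ)³` spans this line and has derivative `4πi` at `z = 0`, the Jacobian of `φ` and `ψ`
equals `(φ ψ'' - ψ φ'')(τ, 0) / (4πi) · ϑ(τ, 2z) / η(τ)³`.

The first Taylor coefficient in `z` that does not vanish identically is a modular form of level one,
so `φ(τ, 0) = 0` in weight `-2`, hence `φ''(τ, 0) = D` is constant, and `ψ(τ, 0) = C` is constant.
If `D = 0`, or if `C = 0` and therefore `ψ''(τ, 0)` is a modular form of weight two, that is zero,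
then the form vanishes to order four at `z = 0`. But an even theta function of index one vanishing
to that order has zero Wronskian with its two half-period translates, hence is a common eigenvector
of two anticommuting operators and must be zero. -/

open scoped Real

section QSeries

lemma norm_cexp_two_pi_I_nat_mul_le (n : ℕ) {σ τ : ℂ} (h : σ.im ≤ τ.im) :
    ‖cexp (2 * π * I * n * τ)‖ ≤ ‖cexp (2 * π * I * n * σ)‖ := by
  have hre (z : ℂ) : (2 * π * I * n * z).re = -(2 * π * n * z.im) := by simp
  rw [norm_exp, norm_exp, hre, hre, Real.exp_le_exp, neg_le_neg_iff]
  gcongr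

variable {a : ℕ → ℂ} {f : ℂ → ℂ}

lemma exists_norm_le_of_hasSum_qSeries
    (hf : ∀ τ : ℂ, 0 < τ.im → HasSum (fun n : ℕ => a n * cexp (2 * π * I * n * τ)) (f τ))
    {y : ℝ} (hy : 0 < y) : ∃ B : ℝ, ∀ τ : ℂ, y ≤ τ.im → ‖f τ‖ ≤ B := by
  have hyI : ((y : ℂ) * I).im = y := by simp
  refine ⟨∑' n : ℕ, ‖a n * cexp (2 * π * I * n * (y * I))‖, fun τ hτ => ?_⟩
  rw [← (hf τ (hy.trans_le hτ)).tsum_eq]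
  refine tsum_of_norm_bounded (hf (y * I) (hyI.symm ▸ hy)).summable.norm.hasSum fun n => ?_
  rw [norm_mul, norm_mul]
  gcongr ‖a n‖ * ?_
  exact norm_cexp_two_pi_I_nat_mul_le n (hyI.trans_le hτ)

lemma differentiableOn_of_hasSum_qSeries
    (hf : ∀ τ : ℂ, 0 < τ.im → HasSum (fun n : ℕ => a n * cexp (2 * π * I * n * τ)) (f τ)) :
    DifferentiableOn ℂ f {τ | 0 < τ.im} := by
  intro τ (hτ : 0 < τ.im)
  obtain ⟨y, hy, hyτ⟩ := exists_between hτ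
  have hyI : ((y : ℂ) * I).im = y := by simp
  have hopen : IsOpen {σ : ℂ | y < σ.im} := isOpen_lt continuous_const continuous_im
  have htsum : DifferentiableOn ℂ (fun σ => ∑' n : ℕ, a n * cexp (2 * π * I * n * σ))
      {σ | y < σ.im} := by
    refine differentiableOn_tsum_of_summable_norm (hf (y * I) (hyI.symm ▸ hy)).summable.norm
      (fun n => by fun_prop) hopen fun n σ hσ => ?_
    rw [norm_mul, norm_mul]
    gcongr ‖a n‖ * ?_
    exact norm_cexp_two_pi_I_nat_mul_le n (hyI.trans_le (le_of_lt hσ))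
  have hfy : DifferentiableOn ℂ f {σ | y < σ.im} :=
    htsum.congr fun σ hσ => (hf σ (hy.trans hσ)).tsum_eq.symm
  exact (hfy.differentiableAt (hopen.mem_nhds hyτ)).differentiableWithinAt

lemma hasSum_qSeries_of_hasSum_prod {β : Type*} {c : ℕ × β → ℂ} {τ s : ℂ}
    (h : HasSum (fun p => c p * cexp (2 * π * I * p.1 * τ)) s) :
    HasSum (fun n : ℕ => (∑' b, c (n, b)) * cexp (2 * π * I * n * τ)) s := by
  refine h.prod_fiberwise fun n => ?_
  rw [← tsum_mul_right]
  exact (h.summable.prod_factor n).hasSum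

end QSeries

namespace IsModularForm

open UpperHalfPlane MatrixGroups ModularForm

variable {k : ℤ} {f : ℂ → ℂ}

lemma slash_eq (hf : IsModularForm k f) (γ : SL(2, ℤ)) :
    (fun τ : ℍ => f τ) ∣[k] γ = fun τ : ℍ => f τ := by
  ext τ
  have hdet : γ 0 0 * γ 1 1 - γ 0 1 * γ 1 0 = 1 := by rw [← Matrix.det_fin_two, γ.det_coe]
  have hdenom : denom γ τ = (γ 1 0 : ℂ) * τ + (γ 1 1 : ℂ) := by simp [denom]
  have hsmul : ((γ • τ : ℍ) : ℂ) = (γ 0 0 * τ + γ 0 1) / (γ 1 0 * τ + γ 1 1) := by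
    simp [UpperHalfPlane.specialLinearGroup_apply]
  have hne : (γ 1 0 : ℂ) * τ + γ 1 1 ≠ 0 := hdenom ▸ denom_ne_zero _ _
  rw [ModularForm.SL_slash_apply, hdenom, hsmul, hf.2.1 _ _ _ _ hdet τ τ.im_pos, mul_right_comm,
    ← zpow_add₀ hne, add_neg_cancel, zpow_zero, one_mul]

lemma exists_modularForm (hf : IsModularForm k f) :
    ∃ F : ModularForm 𝒮ℒ k, ∀ τ : ℍ, F τ = f τ := by
  refine ⟨{ toFun := fun τ : ℍ => f τ, slash_action_eq' := ?_, holo' := ?_, bdd_at_cusps' := ?_ },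
    fun _ => rfl⟩
  · rintro - ⟨γ, rfl⟩
    exact hf.slash_eq γ
  · rw [UpperHalfPlane.mdifferentiable_iff]
    exact hf.1.congr fun τ hτ => by simp [ofComplex_apply_of_im_pos hτ]
  · intro c hc
    rw [OnePoint.isBoundedAt_iff_forall_SL2Z hc]
    intro γ _
    rw [hf.slash_eq, isBoundedAtImInfty_iff]
    obtain ⟨cf, hcf⟩ := hf.2.2
    obtain ⟨B, hB⟩ := exists_norm_le_of_hasSum_qSeries hcf one_pos
    exact ⟨B, 1, fun τ hτ => hB τ hτ⟩

lemma eq_zero_of_neg_weight (hf : IsModularForm k f) (hk : k < 0) {τ : ℂ} (hτ : 0 < τ.im) :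
    f τ = 0 := by
  obtain ⟨F, hF⟩ := hf.exists_modularForm
  rw [← hF ⟨τ, hτ⟩, ModularFormClass.levelOne_neg_weight_eq_zero hk F, Pi.zero_apply]

lemma eq_zero_of_weight_two (hf : IsModularForm 2 f) {τ : ℂ} (hτ : 0 < τ.im) : f τ = 0 := by
  obtain ⟨F, hF⟩ := hf.exists_modularForm
  rw [← hF ⟨τ, hτ⟩, rank_zero_iff_forall_zero.mp levelOne_weight_two_rank_zero F,
    _root_.zero_apply]

lemma exists_eq_const_of_weight_zero (hf : IsModularForm 0 f) :
    ∃ C : ℂ, ∀ τ : ℂ, 0 < τ.im → f τ = C := by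
  obtain ⟨F, hF⟩ := hf.exists_modularForm
  obtain ⟨C, hC⟩ := ModularFormClass.levelOne_weight_zero_const F
  exact ⟨C, fun τ hτ => by rw [← hF ⟨τ, hτ⟩, hC, Function.const_apply]⟩

end IsModularForm

section ExponentialSeries

lemma norm_cexp_mul_le (ω : ℂ) {z : ℂ} {R : ℝ} (hz : ‖z‖ ≤ R) :
    ‖cexp (ω * z)‖ ≤ ‖cexp (ω * (R * (1 + I)))‖ + ‖cexp (ω * (R * (1 - I)))‖ +
      ‖cexp (ω * (R * (-1 + I)))‖ + ‖cexp (ω * (R * (-1 - I)))‖ := by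
  have hR : 0 ≤ R := (norm_nonneg z).trans hz
  have hbound : (ω * z).re ≤ |R * ω.re| + |R * ω.im| := by
    rw [abs_mul, abs_mul, abs_of_nonneg hR, ← mul_add]
    calc (ω * z).re ≤ ‖ω‖ * ‖z‖ := (re_le_norm _).trans (norm_mul ω z).le
      _ ≤ (|ω.re| + |ω.im|) * R := by gcongr; exact norm_le_abs_re_add_abs_im ω
      _ = R * (|ω.re| + |ω.im|) := mul_comm _ _
  simp only [norm_exp]
  calc Real.exp (ω * z).re ≤ Real.exp |R * ω.re| * Real.exp |R * ω.im| := by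
        rw [← Real.exp_add]; gcongr
    _ ≤ (Real.exp (R * ω.re) + Real.exp (-(R * ω.re))) *
          (Real.exp (R * ω.im) + Real.exp (-(R * ω.im))) := by
        gcongr <;> exact Real.exp_abs_le _
    _ = _ := by
        simp only [add_mul, mul_add, ← Real.exp_add]
        simp only [mul_re, add_re, sub_re, neg_re, sub_im, neg_im, mul_im, ofReal_re, ofReal_im,
          I_re, I_im, one_re, one_im]
        ring_nf

variable {ι : Type*} {A ω : ι → ℂ} {f : ℂ → ℂ}

lemma hasSum_deriv_of_hasSum_cexp (hf : ∀ z, HasSum (fun p => A p * cexp (ω p * z)) (f z)) (z : ℂ) :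
    HasSum (fun p => A p * ω p * cexp (ω p * z)) (deriv f z) := by
  have hdominated (w : ℂ) (hw : w ∈ Metric.ball 0 (‖z‖ + 1)) (p : ι) :=
    norm_cexp_mul_le (ω p) (mem_ball_zero_iff.mp hw).le
  have hsummable (w : ℂ) : Summable fun p => ‖A p‖ * ‖cexp (ω p * w)‖ := by
    simpa only [norm_mul] using (hf w).summable.norm
  have hderiv := hasSum_deriv_of_summable_norm (F := fun p w => A p * cexp (ω p * w))
    ((((hsummable _).add (hsummable _)).add (hsummable _)).add (hsummable _))
    (fun p => by fun_prop) (Metric.isOpen_ball (x := 0) (ε := ‖z‖ + 1))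
    (fun p w hw => by
      rw [norm_mul, ← mul_add, ← mul_add, ← mul_add]
      exact mul_le_mul_of_nonneg_left (hdominated w hw p) (norm_nonneg _))
    (mem_ball_zero_iff.mpr (lt_add_one _))
  rw [show (fun w => ∑' p, A p * cexp (ω p * w)) = f from funext fun w => (hf w).tsum_eq] at hderiv
  convert! hderiv using 2 with p
  simp [mul_comm, mul_left_comm]

lemma hasSum_iteratedDeriv_of_hasSum_cexp
    (hf : ∀ z, HasSum (fun p => A p * cexp (ω p * z)) (f z)) (m : ℕ) (z : ℂ) :
    HasSum (fun p => A p * ω p ^ m * cexp (ω p * z)) (iteratedDeriv m f z) := by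
  induction m generalizing z with
  | zero => simpa using hf z
  | succ m ih =>
    rw [iteratedDeriv_succ]
    simpa only [pow_succ, mul_assoc] using hasSum_deriv_of_hasSum_cexp ih z

end ExponentialSeries

section FourierCoefficients

/-- The `n`-th Fourier coefficient of a function on `ℂ` of period one. It is an integral along
`[0, 1]`, rather than `fourierCoeff` on a quotient of `ℝ`, so that the contour can be moved. -/
def periodFourierCoeff (f : ℂ → ℂ) (n : ℤ) : ℂ :=
  ∫ x in (0 : ℝ)..1, f x * cexp (-(2 * π * I * n * x))

variable {f : ℂ → ℂ}

lemma integral_comp_add_of_periodic (hf : Differentiable ℂ f) (hper : Function.Periodic f 1)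
    (σ : ℂ) : ∫ x in (0 : ℝ)..1, f (x + σ) = ∫ x in (0 : ℝ)..1, f x := by
  have hper_im : Function.Periodic (fun x : ℝ => f (x + σ.im * I)) 1 := fun x => by
    simp only [ofReal_add, ofReal_one, add_right_comm _ (1 : ℂ), hper _]
  have hreal : ∫ x in (0 : ℝ)..1, f (x + σ) = ∫ x in (0 : ℝ)..1, f (x + σ.im * I) := by
    calc ∫ x in (0 : ℝ)..1, f (x + σ)
        = ∫ x in (0 : ℝ)..1, f ((x + σ.re : ℝ) + σ.im * I) := by
          simp only [ofReal_add, add_assoc, re_add_im]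
      _ = ∫ x in (0 + σ.re)..(1 + σ.re), f (x + σ.im * I) :=
          intervalIntegral.integral_comp_add_right (fun x : ℝ => f (x + σ.im * I)) σ.re
      _ = ∫ x in (0 : ℝ)..1, f (x + σ.im * I) := by
          simpa only [zero_add, add_comm (1 : ℝ)] using hper_im.intervalIntegral_add_eq σ.re 0
  have hvertical (y : ℝ) : f (1 + y * I) = f (y * I) := by rw [add_comm, hper]
  have hrect := integral_boundary_rect_eq_zero_of_differentiableOn f 0 (1 + σ.im * I)
    hf.differentiableOn
  simp only [zero_re, zero_im, add_re, one_re, mul_re, ofReal_re, I_re, mul_zero, ofReal_im, I_im,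
    mul_one, sub_self, add_zero, add_im, one_im, mul_im, zero_add, ofReal_zero, zero_mul,
    ofReal_one, hvertical] at hrect
  rw [hreal]
  linear_combination -hrect

lemma cexp_int_mul_periodic (n : ℤ) : Function.Periodic (fun z => cexp (-(2 * π * I * n * z))) 1 :=
  fun z => exp_eq_exp_iff_exists_int.mpr ⟨-n, by push_cast; ring⟩

lemma periodFourierCoeff_comp_add (hf : Differentiable ℂ f) (hper : Function.Periodic f 1)
    (σ : ℂ) (n : ℤ) : periodFourierCoeff (fun z => f (z + σ)) n =
      cexp (2 * π * I * n * σ) * periodFourierCoeff f n := by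
  have hshift := integral_comp_add_of_periodic (f := fun z => f z * cexp (-(2 * π * I * n * z)))
    (by fun_prop) (hper.mul (cexp_int_mul_periodic n)) σ
  rw [periodFourierCoeff, periodFourierCoeff, ← hshift, ← intervalIntegral.integral_const_mul]
  congr 1 with x
  rw [mul_left_comm, ← exp_add]
  congr 2
  ring

lemma periodFourierCoeff_comp_neg (hper : Function.Periodic f 1) (n : ℤ) :
    periodFourierCoeff (fun z => f (-z)) n = periodFourierCoeff f (-n) := by
  have hper_real : Function.Periodic
      (fun x : ℝ => f x * cexp (-(2 * π * I * (-n : ℤ) * x))) 1 := fun x => by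
    simpa using (hper.mul (cexp_int_mul_periodic (-n))) x
  have hperiod := hper_real.intervalIntegral_add_eq (-1) 0
  have hneg := intervalIntegral.integral_comp_neg (a := 0) (b := 1)
    (fun x : ℝ => f x * cexp (-(2 * π * I * (-n : ℤ) * x)))
  simp only [neg_zero, neg_add_cancel, zero_add] at hperiod hneg
  rw [periodFourierCoeff, periodFourierCoeff, ← hperiod, ← hneg]
  simp

lemma apply_zero_eq_zero_of_periodFourierCoeff (hf : Continuous f) (hper : Function.Periodic f 1)
    (hcoeff : ∀ n, periodFourierCoeff f n = 0) : f 0 = 0 := by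
  have : Fact (0 < (1 : ℝ)) := ⟨one_pos⟩
  have hper_real : Function.Periodic (fun x : ℝ => f x) 1 := fun x => by simpa using hper x
  let F : C(AddCircle (1 : ℝ), ℂ) :=
    ⟨hper_real.lift, continuous_coinduced_dom.mpr (hf.comp continuous_ofReal)⟩
  have hF (x : ℝ) : F x = f x := hper_real.lift_coe x
  have hzero : fourierCoeff F = 0 := by
    ext n
    rw [fourierCoeff_eq_intervalIntegral F n 0, Pi.zero_apply, ← hcoeff n, periodFourierCoeff]
    simp only [div_one, one_smul, zero_add]
    congr 1 with x
    rw [hF, fourier_coe_apply, smul_eq_mul, mul_comm]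
    congr 2
    push_cast
    ring
  have hsum := has_pointwise_sum_fourier_series_of_summable (f := F) (hzero ▸ summable_zero) (0 : ℝ)
  simp only [hzero, Pi.zero_apply, zero_smul, hF, ofReal_zero] at hsum
  exact hsum.unique hasSum_zero

lemma eq_zero_of_periodFourierCoeff (hf : Differentiable ℂ f) (hper : Function.Periodic f 1)
    (hcoeff : ∀ n, periodFourierCoeff f n = 0) : f = 0 := by
  ext σ
  have hσ := apply_zero_eq_zero_of_periodFourierCoeff (f := fun z => f (z + σ))
    (hf.continuous.comp (by fun_prop)) (hper.add_const σ)
    fun n => by rw [periodFourierCoeff_comp_add hf hper, hcoeff, mul_zero]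
  simpa using hσ

end FourierCoefficients

/-- Theta functions of index `t` for the lattice `ℤ + ℤτ`, on the level of entire functions: these
are the conditions satisfied by `z ↦ φ(τ, z)` for a Jacobi form `φ` of index `t`. -/
structure IsThetaFunction (t : ℤ) (τ : ℂ) (f : ℂ → ℂ) : Prop where
  differentiable : Differentiable ℂ f
  periodic : Function.Periodic f 1
  map_add_tau : ∀ z, f (z + τ) = cexp (-(2 * π * I * t * (τ + 2 * z))) * f z

namespace IsThetaFunction

variable {t : ℤ} {τ : ℂ} {f g : ℂ → ℂ}

lemma const_mul (hf : IsThetaFunction t τ f) (c : ℂ) : IsThetaFunction t τ (fun z => c * f z) where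
  differentiable := hf.differentiable.const_mul c
  periodic z := by simp only [hf.periodic z]
  map_add_tau z := by simp only [hf.map_add_tau]; ring

lemma sub (hf : IsThetaFunction t τ f) (hg : IsThetaFunction t τ g) :
    IsThetaFunction t τ (fun z => f z - g z) where
  differentiable := hf.differentiable.sub hg.differentiable
  periodic z := by simp only [hf.periodic z, hg.periodic z]
  map_add_tau z := by simp only [hf.map_add_tau, hg.map_add_tau]; ring

lemma periodFourierCoeff_add (hf : IsThetaFunction t τ f) (n : ℤ) :
    periodFourierCoeff f (n + 2 * t) =
      cexp (2 * π * I * (n + t) * τ) * periodFourierCoeff f n := by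
  have hshift := periodFourierCoeff_comp_add hf.differentiable hf.periodic τ n
  have hexp : cexp (2 * π * I * (n + t) * τ) =
      cexp (2 * π * I * t * τ) * cexp (2 * π * I * n * τ) := by rw [← exp_add]; ring_nf
  rw [hexp, mul_assoc, ← hshift, periodFourierCoeff, periodFourierCoeff,
    ← intervalIntegral.integral_const_mul]
  congr 1 with x
  rw [hf.map_add_tau, mul_comm (cexp _) (f x), mul_assoc (f x), mul_left_comm, ← exp_add,
    ← exp_add]
  congr 2
  push_cast
  ring

lemma periodFourierCoeff_eq_zero_of_modEq (hf : IsThetaFunction t τ f) {m n : ℤ}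
    (hmn : m ≡ n [ZMOD 2 * t]) (hm : periodFourierCoeff f m = 0) : periodFourierCoeff f n = 0 := by
  obtain ⟨j, hj⟩ := hmn.dvd
  obtain rfl : n = m + 2 * t * j := by linarith
  clear hmn hj
  induction j using Int.induction_on with
  | zero => simpa using hm
  | succ i ih =>
    rw [mul_add_one, ← add_assoc, hf.periodFourierCoeff_add, ih, mul_zero]
  | pred i ih =>
    have hadd := hf.periodFourierCoeff_add (m + 2 * t * (-(i : ℤ) - 1))
    rw [mul_sub_one, add_assoc, sub_add_cancel, ih] at hadd
    rw [mul_sub_one]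
    exact (mul_eq_zero.mp hadd.symm).resolve_left (exp_ne_zero _)

/-- The coefficients of an odd theta function of index two depend on `n` modulo four up to nonzero
factors, and they vanish at `n ≡ 0` and `n ≡ 2`. -/
lemma eq_zero_of_odd_of_periodFourierCoeff_one (hf : IsThetaFunction 2 τ f) (hodd : f.Odd)
    (h1 : periodFourierCoeff f 1 = 0) : f = 0 := by
  have hneg (n : ℤ) : periodFourierCoeff f (-n) = -periodFourierCoeff f n := by
    rw [← periodFourierCoeff_comp_neg hf.periodic, periodFourierCoeff, periodFourierCoeff,
      ← intervalIntegral.integral_neg]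
    simp only [hodd _, neg_mul]
  have h0 : periodFourierCoeff f 0 = 0 := self_eq_neg.mp (by simpa using hneg 0)
  have h2 : periodFourierCoeff f 2 = 0 := by
    refine self_eq_neg.mp ((?_ : _ = periodFourierCoeff f (-2)).trans (hneg 2))
    simpa using hf.periodFourierCoeff_add (-2)
  have h3 : periodFourierCoeff f (-1) = 0 := by rw [hneg, h1, neg_zero]
  refine eq_zero_of_periodFourierCoeff hf.differentiable hf.periodic fun n => ?_
  obtain h | h | h | h : 0 ≡ n [ZMOD 2 * 2] ∨ 1 ≡ n [ZMOD 2 * 2] ∨ 2 ≡ n [ZMOD 2 * 2] ∨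
      -1 ≡ n [ZMOD 2 * 2] := by
    simp only [Int.ModEq]
    omega
  exacts [hf.periodFourierCoeff_eq_zero_of_modEq h h0, hf.periodFourierCoeff_eq_zero_of_modEq h h1,
    hf.periodFourierCoeff_eq_zero_of_modEq h h2, hf.periodFourierCoeff_eq_zero_of_modEq h h3]

lemma deriv_zero_mul_eq_of_odd (hf : IsThetaFunction 2 τ f) (hg : IsThetaFunction 2 τ g)
    (hf_odd : f.Odd) (hg_odd : g.Odd) (z : ℂ) : deriv g 0 * f z = deriv f 0 * g z := by
  set a := periodFourierCoeff f 1
  set b := periodFourierCoeff g 1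
  have hcoeff : periodFourierCoeff (fun z => a * g z - b * f z) 1 = 0 := by
    have hint {h : ℂ → ℂ} (hh : IsThetaFunction 2 τ h) (c : ℂ) : IntervalIntegrable
        (fun x : ℝ => c * (h x * cexp (-(2 * π * I * (1 : ℤ) * x)))) MeasureTheory.volume 0 1 := by
      have := hh.differentiable.continuous
      exact Continuous.intervalIntegrable (by fun_prop) _ _
    simp only [periodFourierCoeff, sub_mul, mul_assoc (_ : ℂ) (_ : ℂ) (cexp _)]
    rw [intervalIntegral.integral_sub (hint hg a) (hint hf b), intervalIntegral.integral_const_mul,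
      intervalIntegral.integral_const_mul]
    exact sub_eq_zero.mpr (mul_comm a b)
  have hzero := ((hg.const_mul a).sub (hf.const_mul b)).eq_zero_of_odd_of_periodFourierCoeff_one
    (fun z => by simp only [hf_odd z, hg_odd z]; ring) hcoeff
  have hprop (w : ℂ) : a * g w = b * f w := sub_eq_zero.mp (congrFun hzero w)
  have hderiv : a * deriv g 0 = b * deriv f 0 := by
    rw [← deriv_const_mul _ (hg.differentiable 0), ← deriv_const_mul _ (hf.differentiable 0),
      funext hprop]
  by_cases hb : b = 0
  · have hg0 : g = 0 := hg.eq_zero_of_odd_of_periodFourierCoeff_one hg_odd hb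
    simp [hg0]
  · refine mul_left_cancel₀ hb ?_
    linear_combination g z * hderiv - deriv g 0 * hprop z

end IsThetaFunction

section Wronskian

/-- The Wronskian `f g' - g f'`; at fixed `τ` it is the Jacobian of two Jacobi forms of the same
index. -/
def wronskian (f g : ℂ → ℂ) (z : ℂ) : ℂ :=
  f z * deriv g z - g z * deriv f z

variable {f g : ℂ → ℂ}

lemma deriv_wronskian (hf : Differentiable ℂ f) (hg : Differentiable ℂ g) (z : ℂ) :
    deriv (wronskian f g) z = f z * iteratedDeriv 2 g z - g z * iteratedDeriv 2 f z := by
  have hf' := (hf.contDiff (n := 2)).differentiable_deriv_two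
  have hg' := (hg.contDiff (n := 2)).differentiable_deriv_two
  have hW : HasDerivAt (wronskian f g) _ z := ((hf z).hasDerivAt.fun_mul (hg' z).hasDerivAt).fun_sub
    ((hg z).hasDerivAt.fun_mul (hf' z).hasDerivAt)
  simp only [hW.deriv, iteratedDeriv_succ, iteratedDeriv_zero]
  ring

lemma deriv_odd_of_even (hf : f.Even) : (deriv f).Odd := fun z => by
  have hcomp := deriv_comp_neg f z
  rw [show (fun z => f (-z)) = f from funext hf] at hcomp
  rw [hcomp, neg_neg]

lemma wronskian_odd_of_even (hf : f.Even) (hg : g.Even) : (wronskian f g).Odd := fun z => by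
  simp only [wronskian, hf z, hg z, deriv_odd_of_even hf z, deriv_odd_of_even hg z]
  ring

lemma exists_eq_const_mul_of_wronskian_eq_zero (hf : Differentiable ℂ f) (hg : Differentiable ℂ g)
    (hf0 : f ≠ 0) (hW : wronskian f g = 0) : ∃ k : ℂ, ∀ z, g z = k * f z := by
  obtain ⟨z₀, hz₀⟩ : ∃ z, f z ≠ 0 := Function.ne_iff.mp hf0
  obtain ⟨r, hr, hball⟩ := Metric.eventually_nhds_iff_ball.mp
    (hf.continuous.continuousAt.eventually_ne hz₀)
  have hderiv (z : ℂ) (hz : z ∈ Metric.ball z₀ r) : HasDerivAt (fun w => g w / f w) 0 z := by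
    convert! (hg z).hasDerivAt.div (hf z).hasDerivAt (hball z hz) using 1
    rw [eq_comm, mul_comm]
    exact div_eq_zero_iff.mpr (Or.inl (congrFun hW z))
  have hratio (z : ℂ) (hz : z ∈ Metric.ball z₀ r) : g z / f z = g z₀ / f z₀ :=
    Metric.isOpen_ball.is_const_of_deriv_eq_zero (convex_ball z₀ r).isPreconnected
      (fun w hw => (hderiv w hw).differentiableAt.differentiableWithinAt)
      (fun w hw => (hderiv w hw).deriv) hz (Metric.mem_ball_self hr)
  have hlocal : g =ᶠ[nhds z₀] fun z => g z₀ / f z₀ * f z := by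
    filter_upwards [Metric.ball_mem_nhds z₀ hr] with z hz
    rw [← hratio z hz, div_mul_cancel₀ _ (hball z hz)]
  have hglobal := AnalyticOnNhd.eq_of_eventuallyEq (fun z _ => hg.analyticAt z)
    (fun z _ => (hf.const_mul (g z₀ / f z₀)).analyticAt z) hlocal
  exact ⟨_, congrFun hglobal⟩

end Wronskian

namespace IsThetaFunction

variable {t : ℤ} {τ : ℂ} {f g : ℂ → ℂ}

lemma deriv_add_one (hf : IsThetaFunction t τ f) (z : ℂ) : deriv f (z + 1) = deriv f z := by
  rw [← deriv_comp_add_const, hf.periodic.funext]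

lemma deriv_add_tau (hf : IsThetaFunction t τ f) (z : ℂ) : deriv f (z + τ) =
    cexp (-(2 * π * I * t * (τ + 2 * z))) * (deriv f z - 4 * π * I * t * f z) := by
  have hexponent : HasDerivAt (fun z => -(2 * π * I * t * (τ + 2 * z))) (-(4 * π * I * t)) z := by
    convert! ((((hasDerivAt_id z).const_mul 2).const_add τ).const_mul (2 * π * I * t : ℂ)).fun_neg
      using 1
    ring
  rw [← deriv_comp_add_const, funext hf.map_add_tau,
    (hexponent.cexp.fun_mul (hf.differentiable z).hasDerivAt).deriv]
  ring

/-- Passing from `z` to `z + τ` adds to `f'` the same multiple of `f` as it adds of `g` to `g'`, and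
these contributions cancel. -/
protected lemma wronskian (hf : IsThetaFunction t τ f) (hg : IsThetaFunction t τ g) :
    IsThetaFunction (2 * t) τ (wronskian f g) where
  differentiable :=
    (hf.differentiable.mul (hg.differentiable.contDiff (n := 2)).differentiable_deriv_two).sub
      (hg.differentiable.mul (hf.differentiable.contDiff (n := 2)).differentiable_deriv_two)
  periodic z := by
    simp only [wronskian, hf.periodic z, hg.periodic z, hf.deriv_add_one, hg.deriv_add_one]
  map_add_tau z := by
    have hexp : cexp (-(2 * π * I * (2 * t : ℤ) * (τ + 2 * z))) =
        cexp (-(2 * π * I * t * (τ + 2 * z))) * cexp (-(2 * π * I * t * (τ + 2 * z))) := by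
      rw [← exp_add]
      push_cast
      ring_nf
    simp only [wronskian, hf.map_add_tau, hg.map_add_tau, hf.deriv_add_tau, hg.deriv_add_tau,
      hexp]
    ring

lemma comp_add_half (hf : IsThetaFunction t τ f) :
    IsThetaFunction t τ (fun z => f (z + 1 / 2)) where
  differentiable := hf.differentiable.comp (by fun_prop)
  periodic := hf.periodic.add_const _
  map_add_tau z := by
    have hexp : cexp (-(2 * π * I * t * (τ + 2 * (z + 1 / 2)))) =
        cexp (-(2 * π * I * t * (τ + 2 * z))) :=
      exp_eq_exp_iff_exists_int.mpr ⟨-t, by push_cast; ring⟩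
    rw [add_right_comm, hf.map_add_tau, hexp]

lemma comp_add_half_tau (hf : IsThetaFunction t τ f) :
    IsThetaFunction t τ (fun z => cexp (2 * π * I * t * z) * f (z + τ / 2)) where
  differentiable := by
    have := hf.differentiable
    fun_prop
  periodic := by
    have hexp : Function.Periodic (fun z => cexp (2 * π * I * t * z)) 1 := fun z =>
      exp_eq_exp_iff_exists_int.mpr ⟨t, by ring⟩
    exact hexp.mul (hf.periodic.add_const _)
  map_add_tau z := by
    rw [add_right_comm, hf.map_add_tau, ← mul_assoc, ← mul_assoc, ← exp_add, ← exp_add]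
    ring_nf

lemma even_comp_add_half (hf : IsThetaFunction t τ f) (heven : f.Even) :
    (fun z => f (z + 1 / 2)).Even := fun z => by
  have hreflect : -(-z + 1 / 2) + 1 = z + 1 / 2 := by ring
  change f (-z + 1 / 2) = f (z + 1 / 2)
  rw [← heven, ← hf.periodic, hreflect]

lemma even_comp_add_half_tau (hf : IsThetaFunction t τ f) (heven : f.Even) :
    (fun z => cexp (2 * π * I * t * z) * f (z + τ / 2)).Even := fun z => by
  have hreflect : z + τ / 2 = -(-z + τ / 2) + τ := by ring
  change _ = cexp (2 * π * I * t * z) * f (z + τ / 2)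
  rw [hreflect, hf.map_add_tau, heven, ← mul_assoc, ← exp_add]
  ring_nf

end IsThetaFunction

/-- The two half-period translations anticommute, so they have no common eigenvector. -/
lemma eq_zero_of_half_translates_eq_const_mul {τ : ℂ} {f : ℂ → ℂ} {k l : ℂ}
    (hk : ∀ z, f (z + 1 / 2) = k * f z)
    (hl : ∀ z, cexp (2 * π * I * z) * f (z + τ / 2) = l * f z) : f = 0 := by
  ext z
  have hanticomm : k * l * f z = 0 := by
    have hsign : cexp (2 * π * I * (z + 1 / 2)) = -cexp (2 * π * I * z) := by
      rw [show 2 * π * I * (z + 1 / 2) = 2 * π * I * z + π * I by ring, exp_add, exp_pi_mul_I,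
        mul_neg_one]
    have hshift := hl (z + 1 / 2)
    rw [add_right_comm, hk, hk, hsign] at hshift
    linear_combination (-1 / 2 : ℂ) * hshift - k / 2 * hl z
  rcases mul_eq_zero.mp hanticomm with hkl | hz
  · rcases mul_eq_zero.mp hkl with rfl | rfl
    · simpa using hk (z - 1 / 2)
    · simpa using hl (z - τ / 2)
  · exact hz

section QPochhammer

/-- The infinite `q`-Pochhammer symbol `(x; q)_∞`, in terms of which both `ϑ` and `η` are
written. -/
def qPochhammer (q x : ℂ) : ℂ :=
  ∏' n : ℕ, (1 - q ^ n * x)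

variable {q : ℂ}

lemma multipliable_qPochhammer (hq : ‖q‖ < 1) (x : ℂ) :
    Multipliable fun n : ℕ => 1 - q ^ n * x := by
  simp_rw [sub_eq_add_neg]
  refine multipliable_one_add_of_summable ?_
  simp only [norm_neg, norm_mul, norm_pow]
  exact (summable_geometric_of_lt_one (norm_nonneg _) hq).mul_right _

lemma qPochhammer_eq_mul (hq : ‖q‖ < 1) (x : ℂ) :
    qPochhammer q x = (1 - x) * qPochhammer q (q * x) := by
  have hshift (n : ℕ) : 1 - q ^ (n + 1) * x = 1 - q ^ n * (q * x) := by ring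
  rw [qPochhammer, qPochhammer, tprod_eq_zero_mul']
  · simp only [hshift, pow_zero, one_mul]
  · simpa only [hshift] using multipliable_qPochhammer hq (q * x)

lemma differentiable_qPochhammer (hq : ‖q‖ < 1) : Differentiable ℂ (qPochhammer q) := by
  have hprod : HasProdLocallyUniformlyOn (fun (n : ℕ) x => 1 + -(q ^ n * x)) (qPochhammer q)
      Set.univ := by
    rw [show qPochhammer q = fun x => ∏' n : ℕ, (1 + -(q ^ n * x)) by
      simp only [← sub_eq_add_neg]; rfl]
    refine hasProdLocallyUniformlyOn_of_forall_compact isOpen_univ fun K _ hK => ?_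
    obtain ⟨C, hC⟩ := hK.isBounded.exists_norm_le
    refine ((summable_geometric_of_lt_one (norm_nonneg _) hq).mul_right C)
      |>.hasProdUniformlyOn_nat_one_add hK (.of_forall fun n x hx => ?_) (fun _ => by fun_prop)
    rw [norm_neg, norm_mul, norm_pow]
    gcongr
    exact hC x hx
  refine differentiableOn_univ.mp (hprod.differentiableOn (.of_forall fun s => ?_) isOpen_univ)
  simpa only [Finset.prod_fn] using DifferentiableOn.finsetProd fun _ _ => by fun_prop

lemma qPochhammer_self_ne_zero (hq : ‖q‖ < 1) : qPochhammer q q ≠ 0 := by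
  have hfactor (n : ℕ) : 1 - q ^ n * q = 1 - q ^ (n + 1) := by rw [pow_succ]
  have hnorm (n : ℕ) : ‖q ^ (n + 1)‖ < 1 :=
    (norm_pow q _).trans_lt (pow_lt_one₀ (norm_nonneg _) hq n.succ_ne_zero)
  simp only [qPochhammer, hfactor, sub_eq_add_neg]
  refine tprod_one_add_ne_zero_of_summable (fun n hn => ?_) ?_
  · rw [← sub_eq_add_neg, sub_eq_zero] at hn
    simpa [← hn] using hnorm n
  · simpa only [norm_neg, norm_pow] using
      (summable_nat_add_iff 1).mpr (summable_geometric_of_lt_one (norm_nonneg _) hq)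

end QPochhammer

section ThetaQuotient

variable {τ : ℂ}

lemma norm_cexp_two_pi_I_lt_one (hτ : 0 < τ.im) : ‖cexp (2 * π * I * τ)‖ < 1 :=
  UpperHalfPlane.norm_exp_two_pi_I_lt_one ⟨τ, hτ⟩

lemma cexp_two_pi_I_succ_mul (τ : ℂ) (n : ℕ) :
    cexp (2 * π * I * (n + 1) * τ) = cexp (2 * π * I * τ) ^ n * cexp (2 * π * I * τ) := by
  rw [← pow_succ, ← exp_nat_mul]
  push_cast
  ring_nf

lemma jtheta_eq_qPochhammer (hτ : 0 < τ.im) (z : ℂ) :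
    jtheta τ z = cexp (π * I * τ / 4) * (cexp (π * I * z) - cexp (-(π * I * z))) *
      (qPochhammer (cexp (2 * π * I * τ)) (cexp (2 * π * I * τ) * cexp (2 * π * I * z)) *
        qPochhammer (cexp (2 * π * I * τ)) (cexp (2 * π * I * τ) * cexp (-(2 * π * I * z))) *
        qPochhammer (cexp (2 * π * I * τ)) (cexp (2 * π * I * τ))) := by
  have hmul := multipliable_qPochhammer (norm_cexp_two_pi_I_lt_one hτ)
  simp only [jtheta, qPochhammer, cexp_two_pi_I_succ_mul, mul_assoc (_ ^ _)]
  rw [← (hmul _).tprod_mul (hmul _), ← ((hmul _).mul (hmul _)).tprod_mul (hmul _)]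

lemma dedekindEta_eq_qPochhammer (τ : ℂ) : dedekindEta τ =
    cexp (π * I * τ / 12) * qPochhammer (cexp (2 * π * I * τ)) (cexp (2 * π * I * τ)) := by
  simp only [dedekindEta, qPochhammer, cexp_two_pi_I_succ_mul]

lemma jtheta_odd (hτ : 0 < τ.im) : (jtheta τ).Odd := fun z => by
  rw [jtheta_eq_qPochhammer hτ, jtheta_eq_qPochhammer hτ]
  simp only [mul_neg, neg_neg]
  ring

lemma jtheta_add_one (hτ : 0 < τ.im) (z : ℂ) : jtheta τ (z + 1) = -jtheta τ z := by
  rw [jtheta_eq_qPochhammer hτ, jtheta_eq_qPochhammer hτ]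
  simp only [mul_add, mul_one, neg_add, exp_add, exp_neg, exp_pi_mul_I, exp_two_pi_mul_I, inv_one,
    inv_neg]
  ring

lemma jtheta_add_tau (hτ : 0 < τ.im) (z : ℂ) :
    jtheta τ (z + τ) = -cexp (-(π * I * (τ + 2 * z))) * jtheta τ z := by
  have hq := norm_cexp_two_pi_I_lt_one hτ
  have hsq (x : ℂ) : cexp (2 * π * I * x) = cexp (π * I * x) ^ 2 := by
    rw [← exp_nat_mul]
    push_cast
    ring_nf
  have hprefactor : cexp (-(π * I * (τ + 2 * z))) =
      (cexp (π * I * τ))⁻¹ * (cexp (π * I * z) ^ 2)⁻¹ := by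
    rw [← hsq, ← exp_neg, ← exp_neg, ← exp_add]
    ring_nf
  rw [jtheta_eq_qPochhammer hτ, jtheta_eq_qPochhammer hτ, hprefactor]
  have hu := exp_ne_zero (π * I * z)
  have hv := exp_ne_zero (π * I * τ)
  simp only [mul_add, exp_neg, exp_add, hsq] at hq ⊢
  generalize cexp (π * I * z) = u at *
  generalize cexp (π * I * τ) = v at *
  have hcancel : v ^ 2 * (u ^ 2 * v ^ 2)⁻¹ = (u ^ 2)⁻¹ := by field_simp
  rw [hcancel, qPochhammer_eq_mul hq (v ^ 2 * u ^ 2), qPochhammer_eq_mul hq (u ^ 2)⁻¹,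
    mul_comm (u ^ 2) (v ^ 2)]
  field_simp
  ring

/-- The function `ϑ(τ, 2z) / η(τ)³`, which spans the odd theta functions of index two. -/
def thetaQuotient (τ z : ℂ) : ℂ :=
  jtheta τ (2 * z) / dedekindEta τ ^ 3

lemma thetaQuotient_odd (hτ : 0 < τ.im) : (thetaQuotient τ).Odd := fun z => by
  rw [thetaQuotient, mul_neg, jtheta_odd hτ, neg_div, thetaQuotient]

lemma exists_thetaQuotient_eq_mul (hτ : 0 < τ.im) : ∃ V : ℂ → ℂ, Differentiable ℂ V ∧ V 0 = 1 ∧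
    ∀ z, thetaQuotient τ z = (cexp (2 * π * I * z) - cexp (-(2 * π * I * z))) * V z := by
  have hq := norm_cexp_two_pi_I_lt_one hτ
  have hP := differentiable_qPochhammer hq
  have hP0 := qPochhammer_self_ne_zero hq
  have heta : cexp (π * I * τ / 12) ^ 3 = cexp (π * I * τ / 4) := by
    rw [← exp_nat_mul]
    push_cast
    ring_nf
  have hq0 := exp_ne_zero (π * I * τ / 4)
  have htheta (z : ℂ) := jtheta_eq_qPochhammer hτ (2 * z)
  have heta_prod := dedekindEta_eq_qPochhammer τ
  set q := cexp (2 * π * I * τ)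
  refine ⟨fun z => qPochhammer q (q * cexp (2 * π * I * (2 * z))) *
    qPochhammer q (q * cexp (-(2 * π * I * (2 * z)))) / qPochhammer q q ^ 2, by fun_prop, ?_,
    fun z => ?_⟩
  · simp only [mul_zero, neg_zero, exp_zero, mul_one]
    field_simp
  · rw [thetaQuotient, htheta, heta_prod, mul_pow, heta,
      show π * I * (2 * z) = 2 * π * I * z by ring]
    field_simp

lemma deriv_thetaQuotient_zero (hτ : 0 < τ.im) : deriv (thetaQuotient τ) 0 = 4 * π * I := by
  obtain ⟨V, hV, hV0, hTV⟩ := exists_thetaQuotient_eq_mul hτ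
  have hlin : HasDerivAt (fun z : ℂ => 2 * π * I * z) (2 * π * I) 0 := by
    simpa using (hasDerivAt_id (0 : ℂ)).const_mul (2 * π * I)
  rw [funext hTV, ((hlin.cexp.fun_sub hlin.fun_neg.cexp).fun_mul (hV 0).hasDerivAt).deriv, hV0]
  simp only [mul_zero, neg_zero, exp_zero]
  ring

lemma thetaQuotient_ne_zero (hτ : 0 < τ.im) : thetaQuotient τ ≠ 0 := fun hzero => by
  have hderiv := deriv_thetaQuotient_zero hτ
  simp [hzero, Real.pi_ne_zero] at hderiv

lemma isThetaFunction_thetaQuotient (hτ : 0 < τ.im) : IsThetaFunction 2 τ (thetaQuotient τ) where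
  differentiable := by
    obtain ⟨V, hV, -, hTV⟩ := exists_thetaQuotient_eq_mul hτ
    rw [funext hTV]
    fun_prop
  periodic z := by
    have htwo : 2 * (z + 1) = 2 * z + 1 + 1 := by ring
    rw [thetaQuotient, htwo, jtheta_add_one hτ, jtheta_add_one hτ, neg_neg, thetaQuotient]
  map_add_tau z := by
    have htwo : 2 * (z + τ) = 2 * z + τ + τ := by ring
    rw [thetaQuotient, htwo, jtheta_add_tau hτ, jtheta_add_tau hτ, thetaQuotient, ← mul_assoc,
      neg_mul_neg, ← exp_add, mul_div_assoc]
    congr 2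
    push_cast
    ring

end ThetaQuotient

namespace IsThetaFunction

variable {τ : ℂ} {f g : ℂ → ℂ}

lemma eq_const_mul_thetaQuotient_of_odd (hτ : 0 < τ.im) (hf : IsThetaFunction 2 τ f)
    (hodd : f.Odd) (z : ℂ) : f z = deriv f 0 / (4 * π * I) * thetaQuotient τ z := by
  have hprop := hf.deriv_zero_mul_eq_of_odd (isThetaFunction_thetaQuotient hτ) hodd
    (thetaQuotient_odd hτ) z
  rw [deriv_thetaQuotient_zero hτ] at hprop
  field_simp [Real.pi_ne_zero, I_ne_zero]
  linear_combination hprop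

lemma wronskian_eq_const_mul_thetaQuotient (hτ : 0 < τ.im) (hf : IsThetaFunction 1 τ f)
    (hg : IsThetaFunction 1 τ g) (hf_even : f.Even) (hg_even : g.Even) (z : ℂ) :
    wronskian f g z = (f 0 * iteratedDeriv 2 g 0 - g 0 * iteratedDeriv 2 f 0) / (4 * π * I) *
      thetaQuotient τ z := by
  rw [(hf.wronskian hg).eq_const_mul_thetaQuotient_of_odd hτ
    (wronskian_odd_of_even hf_even hg_even), deriv_wronskian hf.differentiable hg.differentiable]

/-- The Wronskians of `f` with its two half-period translates vanish, so `f` is proportional to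
both of them. -/
lemma eq_zero_of_even_of_iteratedDeriv_two_eq_zero (hτ : 0 < τ.im) (hf : IsThetaFunction 1 τ f)
    (heven : f.Even) (h0 : f 0 = 0) (h2 : iteratedDeriv 2 f 0 = 0) : f = 0 := by
  by_contra hne
  have hproportional {g : ℂ → ℂ} (hg : IsThetaFunction 1 τ g) (hg_even : g.Even) :
      ∃ k : ℂ, ∀ z, g z = k * f z := by
    refine exists_eq_const_mul_of_wronskian_eq_zero hf.differentiable hg.differentiable hne ?_
    ext z
    rw [hf.wronskian_eq_const_mul_thetaQuotient hτ hg heven hg_even, h0, h2]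
    simp
  obtain ⟨k, hk⟩ := hproportional hf.comp_add_half (hf.even_comp_add_half heven)
  obtain ⟨l, hl⟩ := hproportional hf.comp_add_half_tau (hf.even_comp_add_half_tau heven)
  simp only [Int.cast_one, mul_one] at hl
  exact hne (eq_zero_of_half_translates_eq_const_mul hk hl)

end IsThetaFunction

section LinePullback

variable {l : ℕ}

lemma pairC_smul_right (M : Matrix (Fin l) (Fin l) ℤ) (u v : Fin l → ℂ) (w : ℂ) :
    pairC M u (w • v) = w * pairC M u v := by
  simp only [pairC, Pi.smul_apply, smul_eq_mul, Finset.mul_sum, mul_left_comm]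

lemma pairC_smul_left (M : Matrix (Fin l) (Fin l) ℤ) (u v : Fin l → ℂ) (w : ℂ) :
    pairC M (w • u) v = w * pairC M u v := by
  simp only [pairC, Pi.smul_apply, smul_eq_mul, Finset.mul_sum, mul_assoc]

/-- The restriction of `φ(τ, ·)` to the complex line spanned by `v`, with coordinate `w`. -/
def linePullback (v : Fin l → ℂ) (φ : ℂ → (Fin l → ℂ) → ℂ) (τ w : ℂ) : ℂ :=
  φ τ (w • v)

end LinePullback

lemma iteratedDeriv_mul_of_iteratedDeriv_lt_eq_zero {E g : ℂ → ℂ} (hE : Differentiable ℂ E)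
    (hg : Differentiable ℂ g) {m : ℕ} {z : ℂ} (hlow : ∀ j < m, iteratedDeriv j g z = 0) :
    iteratedDeriv m (fun w => E w * g w) z = E z * iteratedDeriv m g z := by
  rw [iteratedDeriv_fun_mul hE.contDiff.contDiffAt hg.contDiff.contDiffAt,
    Finset.sum_eq_single_of_mem 0 (Finset.mem_range.mpr m.succ_pos)]
  · simp
  · intro i hi hi0
    rw [hlow _ (by grind), mul_zero]

lemma int_mul_add_int_ne_zero {a b c d : ℤ} (hdet : a * d - b * c = 1) {τ : ℂ} (hτ : 0 < τ.im) :
    (c : ℂ) * τ + d ≠ 0 := by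
  intro h
  have him : c = 0 := by simpa [hτ.ne'] using congrArg im h
  have hre : d = 0 := by simpa [him] using h
  simp [him, hre] at hdet

namespace IsWeakJacobiForm

variable {l : ℕ} {M : Matrix (Fin l) (Fin l) ℤ} {k : ℤ} {t : ℕ} {φ : ℂ → (Fin l → ℂ) → ℂ}

lemma apply_neg (hφ : IsWeakJacobiForm M k t φ) {τ : ℂ} (hτ : 0 < τ.im) (z : Fin l → ℂ) :
    φ τ (-z) = (-1) ^ k * φ τ z := by
  simpa [div_neg, ← Pi.neg_def] using hφ.2.1 (-1) 0 0 (-1) (by norm_num) τ hτ z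

lemma even_linePullback (hφ : IsWeakJacobiForm M k t φ) (hk : Even k) (v : Fin l → ℂ) {τ : ℂ}
    (hτ : 0 < τ.im) : (linePullback v φ τ).Even := fun w => by
  rw [linePullback, neg_smul, hφ.apply_neg hτ, hk.neg_one_zpow, one_mul, linePullback]

lemma differentiable_linePullback (hφ : IsWeakJacobiForm M k t φ) (v : Fin l → ℂ) {τ : ℂ}
    (hτ : 0 < τ.im) : Differentiable ℂ (linePullback v φ τ) := by
  rw [← differentiableOn_univ]
  exact hφ.1.comp (f := fun w : ℂ => (τ, w • v)) (by fun_prop) fun _ _ => ⟨hτ, Set.mem_univ _⟩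

lemma isThetaFunction_linePullback (hφ : IsWeakJacobiForm M k t φ) {x : Fin l → ℤ} {s : ℤ}
    (hs : pairC M (zc x) (zc x) = 2 * s) {τ : ℂ} (hτ : 0 < τ.im) :
    IsThetaFunction (t * s) τ (linePullback (zc x) φ τ) where
  differentiable := hφ.differentiable_linePullback _ hτ
  periodic w := by
    have hshift := hφ.2.2.1 0 x τ hτ (w • zc x)
    have hpair : pairC M (zc 0) = 0 := by ext; simp [pairC, zc]
    rw [hpair] at hshift
    simpa [linePullback, add_smul, Pi.add_def, zc] using hshift
  map_add_tau w := by
    have hshift := hφ.2.2.1 x 0 τ hτ (w • zc x)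
    have harg : (fun i => (w • zc x) i + (x i : ℂ) * τ + ((0 : Fin l → ℤ) i : ℂ)) =
        (w + τ) • zc x := by
      ext i
      simp [zc, add_mul, mul_comm]
    rw [harg, pairC_smul_right, hs] at hshift
    rw [linePullback, hshift, linePullback]
    congr 2
    push_cast
    ring

lemma linePullback_moebius (hφ : IsWeakJacobiForm M k t φ) (v : Fin l → ℂ) {a b c d : ℤ}
    (hdet : a * d - b * c = 1) {τ : ℂ} (hτ : 0 < τ.im) (w : ℂ) :
    linePullback v φ ((a * τ + b) / (c * τ + d)) w = (c * τ + d) ^ k *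
      (cexp (t * π * I * c * pairC M v v / (c * τ + d) * ((c * τ + d) * w) ^ 2) *
        linePullback v φ τ ((c * τ + d) * w)) := by
  have hne := int_mul_add_int_ne_zero hdet hτ
  have hmap := hφ.2.1 a b c d hdet τ hτ (((c * τ + d) * w) • v)
  have harg : (fun i => (((c * τ + d) * w) • v) i / (c * τ + d)) = w • v := by
    ext i
    simp only [Pi.smul_apply, smul_eq_mul]
    field_simp
  rw [harg, pairC_smul_left, pairC_smul_right, mul_assoc] at hmap
  rw [linePullback, hmap, linePullback]
  ring_nf

lemma exists_hasSum_iteratedDeriv_linePullback (hφ : IsWeakJacobiForm M k t φ) (v : Fin l → ℂ)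
    (m : ℕ) : ∃ a : ℕ → ℂ, ∀ τ : ℂ, 0 < τ.im →
      HasSum (fun n : ℕ => a n * cexp (2 * π * I * n * τ))
        (iteratedDeriv m (linePullback v φ τ) 0) := by
  obtain ⟨c, -, hc⟩ := hφ.2.2.2
  let ω (p : ℕ × (Fin l → ℚ)) : ℂ := 2 * π * I * pairC M (qc p.2) v
  refine ⟨fun n => ∑' ℓ, c n ℓ * ω (n, ℓ) ^ m, fun τ hτ => ?_⟩
  have hline (w : ℂ) : HasSum (fun p => c p.1 p.2 * cexp (2 * π * I * p.1 * τ) * cexp (ω p * w))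
      (linePullback v φ τ w) := by
    convert! hc τ hτ (w • v) using 2 with p
    rw [mul_assoc, ← exp_add, pairC_smul_right]
    simp only [ω]
    ring_nf
  refine hasSum_qSeries_of_hasSum_prod (c := fun p => c p.1 p.2 * ω p ^ m) ?_
  convert! hasSum_iteratedDeriv_of_hasSum_cexp hline m 0 using 2 with p
  rw [mul_zero, exp_zero, mul_one, mul_right_comm]

lemma isModularForm_iteratedDeriv_linePullback (hφ : IsWeakJacobiForm M k t φ) (v : Fin l → ℂ)
    {m : ℕ} (hlow : ∀ j < m, ∀ τ : ℂ, 0 < τ.im → iteratedDeriv j (linePullback v φ τ) 0 = 0) :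
    IsModularForm (k + m) (fun τ => iteratedDeriv m (linePullback v φ τ) 0) := by
  obtain ⟨coeff, hcoeff⟩ := hφ.exists_hasSum_iteratedDeriv_linePullback v m
  refine ⟨differentiableOn_of_hasSum_qSeries hcoeff, fun a b c d hdet τ hτ => ?_, coeff, hcoeff⟩
  have hg := hφ.differentiable_linePullback v hτ
  have hmoebius := funext (hφ.linePullback_moebius v hdet hτ)
  generalize t * π * I * c * pairC M v v / (c * τ + d) = κ at hmoebius
  have hE : Differentiable ℂ fun w => cexp (κ * w ^ 2) := by fun_prop
  have hEg : ContDiff ℂ m fun w => cexp (κ * w ^ 2) * linePullback v φ τ w := (hE.mul hg).contDiff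
  calc iteratedDeriv m (linePullback v φ ((a * τ + b) / (c * τ + d))) 0
      = (c * τ + d) ^ k * iteratedDeriv m (fun w => cexp (κ * ((c * τ + d) * w) ^ 2) *
          linePullback v φ τ ((c * τ + d) * w)) 0 := by
        rw [hmoebius, iteratedDeriv_const_mul_field]
    _ = (c * τ + d) ^ k * ((c * τ + d) ^ m *
          iteratedDeriv m (fun w => cexp (κ * w ^ 2) * linePullback v φ τ w) 0) := by
        have hcomp := congrFun (iteratedDeriv_comp_const_mul hEg (c * τ + d)) 0
        rw [mul_zero] at hcomp
        rw [hcomp]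
    _ = (c * τ + d) ^ (k + m) * iteratedDeriv m (linePullback v φ τ) 0 := by
        rw [iteratedDeriv_mul_of_iteratedDeriv_lt_eq_zero hE hg fun j hj => hlow j hj τ hτ,
          zero_pow two_ne_zero, mul_zero, exp_zero, one_mul,
          zpow_add₀ (int_mul_add_int_ne_zero hdet hτ), zpow_natCast, mul_assoc]

end IsWeakJacobiForm

namespace IsWeakJacobiForm

section LeadingCoefficients

variable {l : ℕ} {M : Matrix (Fin l) (Fin l) ℤ} {k : ℤ} {t : ℕ} {φ : ℂ → (Fin l → ℂ) → ℂ}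

lemma isModularForm_apply_zero (hφ : IsWeakJacobiForm M k t φ) :
    IsModularForm k (fun τ => φ τ 0) := by
  simpa [linePullback] using
    hφ.isModularForm_iteratedDeriv_linePullback 0 (m := 0) fun j hj => absurd hj (Nat.not_lt_zero j)

lemma apply_zero_of_neg_weight (hφ : IsWeakJacobiForm M k t φ) (hk : k < 0) {τ : ℂ}
    (hτ : 0 < τ.im) : φ τ 0 = 0 :=
  hφ.isModularForm_apply_zero.eq_zero_of_neg_weight hk hτ

lemma isModularForm_iteratedDeriv_two_linePullback (hφ : IsWeakJacobiForm M k t φ) (hk : Even k)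
    (h0 : ∀ τ : ℂ, 0 < τ.im → φ τ 0 = 0) (v : Fin l → ℂ) :
    IsModularForm (k + 2) (fun τ => iteratedDeriv 2 (linePullback v φ τ) 0) := by
  refine hφ.isModularForm_iteratedDeriv_linePullback v fun j hj τ hτ => ?_
  interval_cases j
  · simpa [linePullback] using h0 τ hτ
  · rw [iteratedDeriv_one]
    exact (deriv_odd_of_even (hφ.even_linePullback hk v hτ)).map_zero

end LeadingCoefficients

end IsWeakJacobiForm

section A1

variable {k k' : ℤ} {φ ψ : ℂ → (Fin 1 → ℂ) → ℂ} {τ : ℂ}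

lemma apply_eq_linePullback (φ : ℂ → (Fin 1 → ℂ) → ℂ) (τ : ℂ) (z : Fin 1 → ℂ) :
    φ τ z = linePullback (zc 1) φ τ (z 0) := by
  rw [linePullback]
  congr 1
  ext i
  simp [zc, Subsingleton.elim i 0]

lemma pderiv'_eq_deriv_linePullback (φ : ℂ → (Fin 1 → ℂ) → ℂ) (τ : ℂ) (z : Fin 1 → ℂ) :
    pderiv' 0 φ τ z = deriv (linePullback (zc 1) φ τ) (z 0) := by
  simp only [pderiv', apply_eq_linePullback φ, Function.update_self]

namespace IsWeakJacobiForm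

lemma isThetaFunction_A1 (hφ : IsWeakJacobiForm A1Gram k 1 φ) (hτ : 0 < τ.im) :
    IsThetaFunction 1 τ (linePullback (zc 1) φ τ) := by
  simpa using hφ.isThetaFunction_linePullback (x := 1) (s := 1) (by simp [pairC, zc, A1Gram]) hτ

lemma jacobian_eq_const_mul_thetaQuotient (hφ : IsWeakJacobiForm A1Gram k 1 φ)
    (hψ : IsWeakJacobiForm A1Gram k' 1 ψ) (hk : Even k) (hk' : Even k') (hτ : 0 < τ.im)
    (z : Fin 1 → ℂ) :
    φ τ z * pderiv' 0 ψ τ z - ψ τ z * pderiv' 0 φ τ z =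
      (φ τ 0 * iteratedDeriv 2 (linePullback (zc 1) ψ τ) 0 -
        ψ τ 0 * iteratedDeriv 2 (linePullback (zc 1) φ τ) 0) / (4 * π * I) *
      thetaQuotient τ (z 0) := by
  simp only [apply_eq_linePullback φ, apply_eq_linePullback ψ, pderiv'_eq_deriv_linePullback]
  exact (hφ.isThetaFunction_A1 hτ).wronskian_eq_const_mul_thetaQuotient hτ
    (hψ.isThetaFunction_A1 hτ) (hφ.even_linePullback hk _ hτ) (hψ.even_linePullback hk' _ hτ) (z 0)

lemma exists_iteratedDeriv_two_ne_zero (hφ : IsWeakJacobiForm A1Gram k 1 φ) (hk : Even k)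
    (hne : NotIdenticallyZero φ) (h0 : ∀ τ : ℂ, 0 < τ.im → φ τ 0 = 0) :
    ∃ τ : ℂ, 0 < τ.im ∧ iteratedDeriv 2 (linePullback (zc 1) φ τ) 0 ≠ 0 := by
  obtain ⟨τ, z, hτ, hz⟩ := hne
  refine ⟨τ, hτ, fun h2 => hz ?_⟩
  have hzero := (hφ.isThetaFunction_A1 hτ).eq_zero_of_even_of_iteratedDeriv_two_eq_zero hτ
    (hφ.even_linePullback hk _ hτ) (by simpa [linePullback] using h0 τ hτ) h2
  rw [apply_eq_linePullback φ, hzero, Pi.zero_apply]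

lemma exists_iteratedDeriv_two_eq_const (hφ : IsWeakJacobiForm A1Gram (-2) 1 φ)
    (hne : NotIdenticallyZero φ) : ∃ D : ℂ, D ≠ 0 ∧ ∀ τ : ℂ, 0 < τ.im →
      iteratedDeriv 2 (linePullback (zc 1) φ τ) 0 = D := by
  have h0 (τ : ℂ) (hτ : 0 < τ.im) : φ τ 0 = 0 := hφ.apply_zero_of_neg_weight (by norm_num) hτ
  obtain ⟨D, hD⟩ := (hφ.isModularForm_iteratedDeriv_two_linePullback (by decide) h0
    (zc 1)).exists_eq_const_of_weight_zero
  obtain ⟨τ, hτ, h2⟩ := hφ.exists_iteratedDeriv_two_ne_zero (by decide) hne h0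
  exact ⟨D, hD τ hτ ▸ h2, hD⟩

lemma exists_apply_zero_eq_const (hψ : IsWeakJacobiForm A1Gram 0 1 ψ)
    (hne : NotIdenticallyZero ψ) : ∃ C : ℂ, C ≠ 0 ∧ ∀ τ : ℂ, 0 < τ.im → ψ τ 0 = C := by
  obtain ⟨C, hC⟩ := hψ.isModularForm_apply_zero.exists_eq_const_of_weight_zero
  refine ⟨C, ?_, hC⟩
  rintro rfl
  obtain ⟨τ, hτ, h2⟩ := hψ.exists_iteratedDeriv_two_ne_zero Even.zero hne hC
  exact h2 ((hψ.isModularForm_iteratedDeriv_two_linePullback Even.zero hC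
    (zc 1)).eq_zero_of_weight_two hτ)

end IsWeakJacobiForm

end A1

/-- For nonzero weak Jacobi forms `φ, ψ` of index 1 and weights `-2`
and `0` in the sense of Eichler–Zagier, the Jacobian `φ·∂ψ/∂z - ψ·∂φ/∂z` is not
identically zero, and equals `c·ϑ(τ,2z)/η(τ)³` for some nonzero constant `c`. -/
theorem jacobian_A1 (φ ψ : ℂ → (Fin 1 → ℂ) → ℂ)
    (hφ : IsWeakJacobiForm A1Gram (-2) 1 φ)
    (hφeven : ∀ τ : ℂ, 0 < τ.im → ∀ z : Fin 1 → ℂ, φ τ (-z) = φ τ z)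
    (hφne : NotIdenticallyZero φ)
    (hψ : IsWeakJacobiForm A1Gram 0 1 ψ)
    (hψeven : ∀ τ : ℂ, 0 < τ.im → ∀ z : Fin 1 → ℂ, ψ τ (-z) = ψ τ z)
    (hψne : NotIdenticallyZero ψ) :
    NotIdenticallyZero (fun τ z => φ τ z * pderiv' 0 ψ τ z - ψ τ z * pderiv' 0 φ τ z) ∧
    ∃ c : ℂ, c ≠ 0 ∧ ∀ τ : ℂ, 0 < τ.im → ∀ z : Fin 1 → ℂ,
      φ τ z * pderiv' 0 ψ τ z - ψ τ z * pderiv' 0 φ τ z =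
        c * jtheta τ (2 * z 0) / dedekindEta τ ^ 3 := by
  obtain ⟨C, hC0, hC⟩ := hψ.exists_apply_zero_eq_const hψne
  obtain ⟨D, hD0, hD⟩ := hφ.exists_iteratedDeriv_two_eq_const hφne
  have hc0 : -(C * D) / (4 * π * I) ≠ 0 := by simp [hC0, hD0, Real.pi_ne_zero]
  have hjac (τ : ℂ) (hτ : 0 < τ.im) (z : Fin 1 → ℂ) :
      φ τ z * pderiv' 0 ψ τ z - ψ τ z * pderiv' 0 φ τ z =
        -(C * D) / (4 * π * I) * thetaQuotient τ (z 0) := by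
    rw [hφ.jacobian_eq_const_mul_thetaQuotient hψ (by decide) Even.zero hτ,
      hφ.apply_zero_of_neg_weight (by norm_num) hτ, hC τ hτ, hD τ hτ, zero_mul, zero_sub]
  have hI : 0 < I.im := by simp
  obtain ⟨w, hw⟩ := Function.ne_iff.mp (thetaQuotient_ne_zero hI)
  refine ⟨⟨I, fun _ => w, hI, ?_⟩, _, hc0, fun τ hτ z => ?_⟩
  · simpa only [hjac I hI] using mul_ne_zero hc0 hw
  · rw [hjac τ hτ, thetaQuotient, mul_div_assoc]

end
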